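/- arXiv:2205.07427 — 2 statements merged into one kernel-verified Lean document; each statement's English description precedes it below -/
import Mathlib

section
/- Let (Ω, μ) be a measure space, c* > 0, and let 0 < τ_e < 1 < τ_h. Let ld : Ω → ℝ be measurable and partition Ω into the easy region Ω^e = {x : ld(x) ≤ τ_e·c*}, the medium region Ω^m = {x : τ_e·c* < ld(x) ≤ τ_h·c*}, and the hard region Ω^h = {x : ld(x) > τ_h·c*}, with μ(Ω^e) > 0 and μ(Ω^h) > 0. Let g : Ω → ℝ be integrable with ∫_Ω g dμ = 0 and satisfying: g(x) > 0 whenever ld(x) < c*, g(x) < 0 whenever ld(x) > c*, and g(x) = 0 whenever ld(x) = c*. Let w take the constant nonnegative value ω_e on Ω^e, ω_m on Ω^m, and ω_h on Ω^h, with ω_e ≥ ω_m ≥ ω_h and ω_e > ω_h, and assume w·g is integrable. Then ∫_Ω w(x)·g(x) dμ(x) > 0; consequently, if the weighted generalization error Err^w : ℝ → ℝ is differentiable, unimodal with minimizer c'^*, and its derivative at c* equals ∫_Ω w(x)·g(x) dμ(x), then c'^* < c*. (Paper's Corollary 3: region weights nonincreasing from easy to hard samples, with strictly larger weight on easy than on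 hard, make the new optimal model complexity strictly smaller.) -/
/-!
Since `∫ g = 0`, subtracting a constant `k` from the weight does not change `∫ w * g`. Taking for
`k` the weight of the medium region, which contains `cstar`, the factors `w - k` and `g` change sign
at the same place, so `(w - k) * g` is nonnegative; it is nonzero on the easy or on the hard region.
Finally, the weighted error cannot have a positive derivative at `cstar` while it still decreases
there, so its minimizer lies strictly below `cstar`.
-/

open MeasureTheory

lemma lt_of_antitoneOn_Iic_of_hasDerivAt_pos {f : ℝ → ℝ} {f' m c : ℝ}
    (hanti : AntitoneOn f (Set.Iic m)) (hf : HasDerivAt f f' c) (hf' : 0 < f') : m < c := by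
  by_contra! hcm
  exact hf'.not_ge <| hf.hasDerivWithinAt.nonpos_of_antitoneOn (uniqueDiffWithinAt_Iic c).accPt
    (hanti.mono (Set.Iic_subset_Iic.2 hcm))

section ShiftedWeight

variable {α : Type*} [MeasurableSpace α] {μ : Measure α} {w g : α → ℝ} {k : ℝ}

lemma integral_sub_const_mul_of_integral_eq_zero (hg : Integrable g μ) (hg0 : ∫ x, g x ∂μ = 0)
    (hwg : Integrable (fun x => w x * g x) μ) :
    ∫ x, (w x - k) * g x ∂μ = ∫ x, w x * g x ∂μ := by
  simp only [sub_mul]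
  rw [integral_sub hwg (hg.const_mul k), integral_const_mul, hg0, mul_zero, sub_zero]

lemma integral_mul_pos_of_sub_const_mul_nonneg (hg : Integrable g μ) (hg0 : ∫ x, g x ∂μ = 0)
    (hwg : Integrable (fun x => w x * g x) μ) (hnonneg : 0 ≤ᵐ[μ] fun x => (w x - k) * g x)
    (hsupp : 0 < μ (Function.support fun x => (w x - k) * g x)) :
    0 < ∫ x, w x * g x ∂μ := by
  have hint : Integrable (fun x => (w x - k) * g x) μ := by
    simp only [sub_mul]
    exact hwg.sub (hg.const_mul k)
  rw [← integral_sub_const_mul_of_integral_eq_zero (k := k) hg hg0 hwg]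
  exact (integral_pos_iff_support_of_nonneg_ae hnonneg hint).2 hsupp

end ShiftedWeight

section RegionWeights

variable {α β γ : Type*} [LinearOrder β] {ld : α → β} {w : α → γ} {a b c : β} {ωe ωm ωh : γ}

lemma medium_weight_le [Preorder γ] (hcb : c ≤ b) (hem : ωm ≤ ωe)
    (hwe : ∀ x, ld x ≤ a → w x = ωe) (hwm : ∀ x, a < ld x → ld x ≤ b → w x = ωm)
    {x : α} (hx : ld x ≤ c) : ωm ≤ w x := by
  rcases le_or_gt (ld x) a with heasy | hmedium
  · exact hem.trans_eq (hwe x heasy).symm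
  · exact (hwm x hmedium (hx.trans hcb)).ge

lemma weight_le_medium [Preorder γ] (hac : a < c) (hmh : ωh ≤ ωm)
    (hwm : ∀ x, a < ld x → ld x ≤ b → w x = ωm) (hwh : ∀ x, b < ld x → w x = ωh)
    {x : α} (hx : c ≤ ld x) : w x ≤ ωm := by
  rcases le_or_gt (ld x) b with hmedium | hhard
  · exact (hwm x (hac.trans_le hx) hmedium).le
  · exact (hwh x hhard).trans_le hmh

lemma measure_weight_ne_medium_pos [MeasurableSpace α] {μ : Measure α} (hac : a < c) (hcb : c ≤ b)
    (hμe : 0 < μ {x | ld x ≤ a}) (hμh : 0 < μ {x | b < ld x}) (heh : ωe ≠ ωh)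
    (hwe : ∀ x, ld x ≤ a → w x = ωe) (hwh : ∀ x, b < ld x → w x = ωh) :
    0 < μ {x | ld x ≠ c ∧ w x ≠ ωm} := by
  by_cases hem : ωe = ωm
  · refine hμh.trans_le (measure_mono fun x (hx : b < ld x) => ⟨(hcb.trans_lt hx).ne', ?_⟩)
    exact hwh x hx ▸ hem ▸ heh.symm
  · refine hμe.trans_le (measure_mono fun x (hx : ld x ≤ a) => ⟨(hx.trans_lt hac).ne, ?_⟩)
    exact hwe x hx ▸ hem

end RegionWeights

section SignChange

variable {α β R : Type*} [LinearOrder β] [Ring R] [LinearOrder R] [IsStrictOrderedRing R]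
  {ld : α → β} {c : β} {w g : α → R} {k : R}

lemma sub_const_mul_nonneg_of_sign_change (hpos : ∀ x, ld x < c → 0 < g x)
    (hneg : ∀ x, c < ld x → g x < 0) (hle : ∀ x, ld x ≤ c → k ≤ w x)
    (hge : ∀ x, c ≤ ld x → w x ≤ k) (x : α) : 0 ≤ (w x - k) * g x := by
  rcases lt_trichotomy (ld x) c with hlt | heq | hgt
  · exact mul_nonneg (sub_nonneg.2 (hle x hlt.le)) (hpos x hlt).le
  · rw [(hge x heq.ge).antisymm (hle x heq.le), sub_self, zero_mul]
  · exact mul_nonneg_of_nonpos_of_nonpos (sub_nonpos.2 (hge x hgt.le)) (hneg x hgt).le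

lemma setOf_ne_subset_support_sub_const_mul (hpos : ∀ x, ld x < c → 0 < g x)
    (hneg : ∀ x, c < ld x → g x < 0) :
    {x | ld x ≠ c ∧ w x ≠ k} ⊆ Function.support fun x => (w x - k) * g x := by
  rintro x ⟨hld, hw⟩
  have hg : g x ≠ 0 := hld.lt_or_gt.elim (fun h => (hpos x h).ne') (fun h => (hneg x h).ne)
  exact mul_ne_zero (sub_ne_zero.2 hw) hg

end SignChange

theorem cor3_region_weights_decreasing_general {Ω : Type*} [MeasurableSpace Ω] {μ : Measure Ω}
    {cstar : ℝ} {ld : Ω → ℝ} {g : Ω → ℝ} (hg : Integrable g μ) (hg0 : ∫ x, g x ∂μ = 0)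
    (hpos : ∀ x, ld x < cstar → 0 < g x) (hneg : ∀ x, cstar < ld x → g x < 0)
    {w : Ω → ℝ} {k : ℝ} (hwg : Integrable (fun x => w x * g x) μ)
    (hle : ∀ x, ld x ≤ cstar → k ≤ w x) (hge : ∀ x, cstar ≤ ld x → w x ≤ k)
    (hμ : 0 < μ {x | ld x ≠ cstar ∧ w x ≠ k}) :
    0 < ∫ x, w x * g x ∂μ ∧
      ∀ (Errw : ℝ → ℝ) (c' : ℝ), AntitoneOn Errw (Set.Iic c') →
        HasDerivAt Errw (∫ x, w x * g x ∂μ) cstar → c' < cstar := by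
  have hint : 0 < ∫ x, w x * g x ∂μ :=
    integral_mul_pos_of_sub_const_mul_nonneg hg hg0 hwg
      (.of_forall (sub_const_mul_nonneg_of_sign_change hpos hneg hle hge))
      (hμ.trans_le <| measure_mono <| setOf_ne_subset_support_sub_const_mul hpos hneg)
  exact ⟨hint, fun _ _ hanti hder => lt_of_antitoneOn_Iic_of_hasDerivAt_pos hanti hder hint⟩

/-- Paper's Corollary 3: constant region weights nonincreasing from the easy region
through the medium region to the hard region, strictly larger on easy than on hard,
make the derivative of the weighted error at `cstar` strictly positive, hence the new
optimal model complexity strictly smaller than `cstar`. -/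
theorem cor3_region_weights_decreasing
    {Ω : Type*} [MeasurableSpace Ω] (μ : Measure Ω)
    (cstar : ℝ) (hcstar : 0 < cstar)
    (τe τh : ℝ) (hτe0 : 0 < τe) (hτe1 : τe < 1) (hτh : 1 < τh)
    (ld : Ω → ℝ) (hld : Measurable ld)
    (hμe : 0 < μ {x | ld x ≤ τe * cstar})
    (hμh : 0 < μ {x | τh * cstar < ld x})
    (g : Ω → ℝ) (hg : Integrable g μ) (hg0 : ∫ x, g x ∂μ = 0)
    (hpos : ∀ x, ld x < cstar → 0 < g x)
    (hneg : ∀ x, cstar < ld x → g x < 0)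
    (hzero : ∀ x, ld x = cstar → g x = 0)
    (ωe ωm ωh : ℝ) (hωe : 0 ≤ ωe) (hωm : 0 ≤ ωm) (hωh : 0 ≤ ωh)
    (hem : ωm ≤ ωe) (hmh : ωh ≤ ωm) (heh : ωh < ωe)
    (w : Ω → ℝ)
    (hwe : ∀ x, ld x ≤ τe * cstar → w x = ωe)
    (hwm : ∀ x, τe * cstar < ld x → ld x ≤ τh * cstar → w x = ωm)
    (hwh : ∀ x, τh * cstar < ld x → w x = ωh)
    (hwg : Integrable (fun x => w x * g x) μ) :
    0 < ∫ x, w x * g x ∂μ ∧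
      (∀ (Errw : ℝ → ℝ) (c' : ℝ), Differentiable ℝ Errw →
        StrictAntiOn Errw (Set.Iic c') → StrictMonoOn Errw (Set.Ici c') →
        deriv Errw cstar = ∫ x, w x * g x ∂μ → c' < cstar) := by
  have hac : τe * cstar < cstar := mul_lt_of_lt_one_left hcstar hτe1
  have hcb : cstar < τh * cstar := lt_mul_of_one_lt_left hcstar hτh
  obtain ⟨hint, hmin⟩ := cor3_region_weights_decreasing_general hg hg0 hpos hneg hwg
    (fun _ => medium_weight_le hcb.le hem hwe hwm) (fun _ => weight_le_medium hac hmh hwm hwh)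
    (measure_weight_ne_medium_pos hac hcb.le hμe hμh heh.ne' hwe hwh)
  exact ⟨hint, fun Errw c' hdiff hanti _ hder =>
    hmin Errw c' hanti.antitoneOn (hder ▸ (hdiff cstar).hasDerivAt)⟩
end

section
/- Let (Ω, μ) be a measure space, L > 0, and ld : Ω → ℝ a measurable learning-difficulty function with 0 < ld(x) ≤ L for every x ∈ Ω. For γ ∈ ℝ define the focal-type weight w_γ(x) = (ld(x)/L)^γ. Fix γ₁ < γ₂. Let c₁ > 0, and let g : Ω → ℝ be such that w_{γ₁}·g and w_{γ₂}·g are integrable, ∫_Ω w_{γ₁}(x)·g(x) dμ(x) = 0 (first-order optimality of c₁ for Err^{w_{γ₁}}), g(x) > 0 whenever ld(x) < c₁, g(x) < 0 whenever ld(x) > c₁, g(x) = 0 whenever ld(x) = c₁, and μ({x : g(x) ≠ 0}) > 0. Then ∫_Ω w_{γ₂}(x)·g(x) dμ(x) < 0; consequently, if Err^{w_{γ₂}} : ℝ → ℝ is differentiable, unimodal with minimizer c₂, and its derivative at c₁ equals ∫_Ω w_{γ₂}(x)·g(x) dμ(x), then c₂ > c₁. (Paper's Corollary 4 on Focal loss: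 for weights w_γ(x) = (LD(x)/max LD)^γ, a larger exponent γ yields a strictly larger optimal model complexity, i.e., γ₁ < γ₂ implies c*(γ₁) < c*(γ₂).) -/
open MeasureTheory Real

/-!
The ratio `w_{γ₂} / w_{γ₁} = (ld / L) ^ (γ₂ - γ₁)` increases with the difficulty and crosses the
value `k = (c₁ / L) ^ (γ₂ - γ₁)` at `ld = c₁`, exactly where `g` changes sign from `+` to `-`.
Hence `w_{γ₂} g ≤ k w_{γ₁} g` pointwise, strictly where `g ≠ 0`, and the right-hand side integrates
to `0`. So the `γ₂`-weighted error has negative derivative at `c₁`, which is impossible on the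
increasing branch to the right of its minimizer.
-/

section Integral

variable {Ω : Type*} [MeasurableSpace Ω] {μ : Measure Ω}

theorem integral_lt_integral_of_ae_le_of_frequently_lt {f g : Ω → ℝ} (hf : Integrable f μ)
    (hg : Integrable g μ) (hle : f ≤ᵐ[μ] g) (hlt : ∃ᵐ x ∂μ, f x < g x) :
    ∫ x, f x ∂μ < ∫ x, g x ∂μ := by
  refine (integral_mono_ae hf hg hle).lt_of_ne fun heq => hlt ?_
  have hae : f =ᵐ[μ] g := (integral_eq_iff_of_ae_le hf hg hle).1 heq
  exact hae.mono fun x hx => hx.not_lt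

theorem integral_mul_neg_of_single_crossing {f r : Ω → ℝ} {k : ℝ} (hf : Integrable f μ)
    (hrf : Integrable (fun x => r x * f x) μ) (hf_zero : ∫ x, f x ∂μ = 0)
    (hpos : ∀ᵐ x ∂μ, 0 < f x → r x < k) (hneg : ∀ᵐ x ∂μ, f x < 0 → k < r x)
    (hne : ∃ᵐ x ∂μ, f x ≠ 0) :
    ∫ x, r x * f x ∂μ < 0 := by
  have hlt : ∀ᵐ x ∂μ, f x ≠ 0 → r x * f x < k * f x := by
    filter_upwards [hpos, hneg] with x hxpos hxneg hx
    rcases hx.lt_or_gt with h | h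
    · exact mul_lt_mul_of_neg_right (hxneg h) h
    · exact mul_lt_mul_of_pos_right (hxpos h) h
  have hle : ∀ᵐ x ∂μ, r x * f x ≤ k * f x := by
    filter_upwards [hlt] with x hx
    by_cases h : f x = 0
    · simp [h]
    · exact (hx h).le
  calc ∫ x, r x * f x ∂μ
      < ∫ x, k * f x ∂μ :=
        integral_lt_integral_of_ae_le_of_frequently_lt hrf (hf.const_mul k) hle
          ((hne.and_eventually hlt).mono fun _ h => h.2 h.1)
    _ = 0 := by rw [integral_const_mul, hf_zero, mul_zero]

end Integral

theorem lt_of_hasDerivAt_neg_of_monotoneOn_Ici {f : ℝ → ℝ} {f' a m : ℝ} (hf : HasDerivAt f f' a)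
    (hf' : f' < 0) (hmono : MonotoneOn f (Set.Ici m)) : a < m := by
  by_contra! hma
  have hacc : AccPt a (Filter.principal (Set.Ici a)) := (uniqueDiffWithinAt_Ici a).accPt
  have hnonneg : 0 ≤ f' :=
    hf.hasDerivWithinAt.nonneg_of_monotoneOn hacc (hmono.mono (Set.Ici_subset_Ici.2 hma))
  exact hf'.not_ge hnonneg

/-- The theoretical Focal-loss weight `(LD(x) / max LD) ^ γ`, as a function of the difficulty
`d = LD(x)`. The normalization `max LD` is a free parameter `L`. -/
noncomputable def focalWeight (L γ d : ℝ) : ℝ :=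
  (d / L) ^ γ

namespace focalWeight

variable {L d : ℝ}

theorem pos (hL : 0 < L) (γ : ℝ) (hd : 0 < d) : 0 < focalWeight L γ d :=
  rpow_pos_of_pos (div_pos hd hL) γ

theorem sub_mul_self (hL : 0 < L) (γ₁ γ₂ : ℝ) (hd : 0 < d) :
    focalWeight L (γ₂ - γ₁) d * focalWeight L γ₁ d = focalWeight L γ₂ d := by
  simp only [focalWeight, ← rpow_add (div_pos hd hL), sub_add_cancel]

theorem strictMonoOn (hL : 0 < L) {γ : ℝ} (hγ : 0 < γ) :
    StrictMonoOn (focalWeight L γ) (Set.Ici 0) := fun _ hd _ _ hlt =>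
  rpow_lt_rpow (div_nonneg hd hL.le) (div_lt_div_of_pos_right hlt hL) hγ

end focalWeight

theorem cor4_focal_loss_gamma_general {Ω : Type*} [MeasurableSpace Ω] {μ : Measure Ω} {L : ℝ}
    (hL : 0 < L) {ld g : Ω → ℝ} (hld : ∀ᵐ x ∂μ, 0 < ld x) {γ₁ γ₂ : ℝ} (hγ : γ₁ < γ₂) {c₁ : ℝ}
    (hc₁ : 0 < c₁) (hint₁ : Integrable (fun x => focalWeight L γ₁ (ld x) * g x) μ)
    (hint₂ : Integrable (fun x => focalWeight L γ₂ (ld x) * g x) μ)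
    (hopt : ∫ x, focalWeight L γ₁ (ld x) * g x ∂μ = 0)
    (hpos : ∀ᵐ x ∂μ, 0 < g x → ld x < c₁) (hneg : ∀ᵐ x ∂μ, g x < 0 → c₁ < ld x)
    (hne : ∃ᵐ x ∂μ, g x ≠ 0) :
    ∫ x, focalWeight L γ₂ (ld x) * g x ∂μ < 0 ∧
      ∀ (Errw : ℝ → ℝ) (c₂ : ℝ),
        HasDerivAt Errw (∫ x, focalWeight L γ₂ (ld x) * g x ∂μ) c₁ →
        MonotoneOn Errw (Set.Ici c₂) → c₁ < c₂ := by
  have hratio : (fun x => focalWeight L γ₂ (ld x) * g x) =ᵐ[μ]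
      fun x => focalWeight L (γ₂ - γ₁) (ld x) * (focalWeight L γ₁ (ld x) * g x) := by
    filter_upwards [hld] with x hx
    rw [← mul_assoc, focalWeight.sub_mul_self hL γ₁ γ₂ hx]
  have hmono : StrictMonoOn (focalWeight L (γ₂ - γ₁)) (Set.Ici 0) :=
    focalWeight.strictMonoOn hL (sub_pos.2 hγ)
  have hderiv_neg : ∫ x, focalWeight L γ₂ (ld x) * g x ∂μ < 0 := by
    rw [integral_congr_ae hratio]
    refine integral_mul_neg_of_single_crossing (k := focalWeight L (γ₂ - γ₁) c₁) hint₁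
      (hint₂.congr hratio) hopt ?_ ?_ ?_
    · filter_upwards [hld, hpos] with x hx hxpos hwg
      exact hmono hx.le hc₁.le (hxpos (pos_of_mul_pos_right hwg (focalWeight.pos hL γ₁ hx).le))
    · filter_upwards [hld, hneg] with x hx hxneg hwg
      exact hmono hc₁.le hx.le (hxneg (neg_of_mul_neg_right hwg (focalWeight.pos hL γ₁ hx).le))
    · exact (hne.and_eventually hld).mono fun x ⟨hg, hx⟩ =>
        mul_ne_zero (focalWeight.pos hL γ₁ hx).ne' hg
  exact ⟨hderiv_neg, fun _ _ hderiv => lt_of_hasDerivAt_neg_of_monotoneOn_Ici hderiv hderiv_neg⟩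

/-- Paper's Corollary 4 (Focal loss): for focal-type weights `w_γ(x) = (ld(x)/L)^γ`
with `0 < ld ≤ L`, if `c₁` is first-order optimal for the `γ₁`-weighted error and
`γ₁ < γ₂`, then the derivative of the `γ₂`-weighted error at `c₁` is strictly negative,
hence the new optimal complexity `c₂` satisfies `c₂ > c₁`. -/
theorem cor4_focal_loss_gamma
    {Ω : Type*} [MeasurableSpace Ω] (μ : Measure Ω)
    (L : ℝ) (hL : 0 < L)
    (ld : Ω → ℝ) (hld : Measurable ld)
    (hldpos : ∀ x, 0 < ld x) (hldle : ∀ x, ld x ≤ L)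
    (γ₁ γ₂ : ℝ) (hγ : γ₁ < γ₂)
    (c₁ : ℝ) (hc₁ : 0 < c₁)
    (g : Ω → ℝ)
    (w₁ w₂ : Ω → ℝ)
    (hw₁ : ∀ x, w₁ x = (ld x / L) ^ γ₁)
    (hw₂ : ∀ x, w₂ x = (ld x / L) ^ γ₂)
    (hint₁ : Integrable (fun x => w₁ x * g x) μ)
    (hint₂ : Integrable (fun x => w₂ x * g x) μ)
    (hopt : ∫ x, w₁ x * g x ∂μ = 0)
    (hpos : ∀ x, ld x < c₁ → 0 < g x)
    (hneg : ∀ x, c₁ < ld x → g x < 0)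
    (hzero : ∀ x, ld x = c₁ → g x = 0)
    (hnd : 0 < μ {x | g x ≠ 0}) :
    ∫ x, w₂ x * g x ∂μ < 0 ∧
      (∀ (Errw : ℝ → ℝ) (c₂ : ℝ), Differentiable ℝ Errw →
        StrictAntiOn Errw (Set.Iic c₂) → StrictMonoOn Errw (Set.Ici c₂) →
        deriv Errw c₁ = ∫ x, w₂ x * g x ∂μ → c₂ > c₁) := by
  obtain rfl : w₁ = fun x => focalWeight L γ₁ (ld x) := funext hw₁
  obtain rfl : w₂ = fun x => focalWeight L γ₂ (ld x) := funext hw₂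
  have heasy : ∀ x, 0 < g x → ld x < c₁ := by grind
  have hhard : ∀ x, g x < 0 → c₁ < ld x := by grind
  obtain ⟨hderiv_neg, hlt⟩ := cor4_focal_loss_gamma_general hL (ae_of_all μ hldpos) hγ hc₁ hint₁
    hint₂ hopt (ae_of_all μ heasy) (ae_of_all μ hhard) (frequently_ae_iff.2 hnd.ne')
  exact ⟨hderiv_neg, fun Errw c₂ hd _ hmono hderiv =>
    hlt Errw c₂ (hderiv ▸ (hd c₁).hasDerivAt) hmono.monotoneOn⟩
end
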